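/- arXiv:2004.12931 — 3 statements merged into one kernel-verified Lean document; each statement's English description precedes it below -/
import Mathlib

section
/- Let Ω be a Hermitian d×d matrix, A a Hermitian N×N matrix, and B an N×d complex matrix with Null(A) ⊆ Null(B*). Set W = Ω − B*A⁺B, let P be the orthogonal projection onto Null(Ω), let 𝒬 = Null(BPB*) ⊆ ℂ^N, let S be the Hermitian operator obtained by restricting A − BΩ⁺B* to 𝒬 (i.e. Q(A − BΩ⁺B*)Q* viewed as an operator on 𝒬, with Q the orthogonal projection onto 𝒬), and let i_∞(S) := rank(BPB*) = N − dim 𝒬. Then: i_−(W) = i_−(Ω) + i_−(S) + i_∞(S) − i_−(A); i_0(W) = i_0(Ω) + i_0(S) − i_∞(S) − i_0(A); and i_+(W) = i_+(Ω) + i_+(S) + i_∞(S) − i_+(A) = i_+(Ω) − i_−(S) − i_0(S) + i_−(A) + i_0(A). -/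
noncomputable section

open Matrix Complex
open scoped ComplexOrder

/-- Eigenvalues of a square complex matrix, sorted in increasing order
(junk value `0` if the matrix is not Hermitian). -/
noncomputable def sortedEigs {n : ℕ} (A : Matrix (Fin n) (Fin n) ℂ) : Fin n → ℝ :=
  if hA : A.IsHermitian then hA.eigenvalues ∘ Tuple.sort hA.eigenvalues else 0

/-- The Moore–Penrose pseudoinverse of a Hermitian matrix (junk value `0` otherwise). -/
noncomputable def pinvH {m : Type*} [Fintype m] [DecidableEq m] (A : Matrix m m ℂ) :
    Matrix m m ℂ :=
  if hA : A.IsHermitian then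
    (hA.eigenvectorUnitary : Matrix m m ℂ) *
      Matrix.diagonal (fun i => if hA.eigenvalues i = 0 then 0 else ((hA.eigenvalues i : ℂ))⁻¹) *
      star (hA.eigenvectorUnitary : Matrix m m ℂ)
  else 0

/-- The orthogonal projection onto the null space of a Hermitian matrix. -/
noncomputable def nullProj {m : Type*} [Fintype m] [DecidableEq m] (A : Matrix m m ℂ) :
    Matrix m m ℂ :=
  1 - pinvH A * A

/-- The number of positive eigenvalues (with multiplicity) of a Hermitian matrix. -/
noncomputable def iPos {m : Type*} [Fintype m] [DecidableEq m] (A : Matrix m m ℂ) : ℕ :=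
  if hA : A.IsHermitian then Nat.card {i // 0 < hA.eigenvalues i} else 0

/-- The number of negative eigenvalues (with multiplicity) of a Hermitian matrix. -/
noncomputable def iNeg {m : Type*} [Fintype m] [DecidableEq m] (A : Matrix m m ℂ) : ℕ :=
  if hA : A.IsHermitian then Nat.card {i // hA.eigenvalues i < 0} else 0

/-- The number of zero eigenvalues (with multiplicity) of a Hermitian matrix. -/
noncomputable def iZero {m : Type*} [Fintype m] [DecidableEq m] (A : Matrix m m ℂ) : ℕ :=
  if hA : A.IsHermitian then Nat.card {i // hA.eigenvalues i = 0} else 0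

section helpers

set_option linter.unusedSectionVars false
set_option linter.unusedSimpArgs false

variable {n m k l : Type*} [Fintype n] [DecidableEq n] [Fintype m] [DecidableEq m]
  [Fintype k] [DecidableEq k] [Fintype l] [DecidableEq l]

def CLe (A : Matrix n n ℂ) (D : Matrix m m ℂ) : Prop := ∃ Y : Matrix m n ℂ, A = Yᴴ * D * Y

def Cg (A : Matrix n n ℂ) (D : Matrix m m ℂ) : Prop := CLe A D ∧ CLe D A

theorem CLe.trans {A : Matrix n n ℂ} {D : Matrix m m ℂ} {E : Matrix k k ℂ}
    (h : CLe A D) (h' : CLe D E) : CLe A E := by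
  obtain ⟨Y, rfl⟩ := h
  obtain ⟨Z, rfl⟩ := h'
  exact ⟨Z * Y, by simp only [conjTranspose_mul, Matrix.mul_assoc]⟩

theorem CLe.neg {A : Matrix n n ℂ} {D : Matrix m m ℂ} (h : CLe A D) : CLe (-A) (-D) := by
  obtain ⟨Y, rfl⟩ := h
  exact ⟨Y, by simp⟩

theorem CLe.blocks {A : Matrix n n ℂ} {D : Matrix m m ℂ} {A' : Matrix k k ℂ} {D' : Matrix l l ℂ}
    (h : CLe A D) (h' : CLe A' D') : CLe (fromBlocks A 0 0 A') (fromBlocks D 0 0 D') := by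
  obtain ⟨Y, rfl⟩ := h
  obtain ⟨Z, rfl⟩ := h'
  exact ⟨fromBlocks Y 0 0 Z, by simp [fromBlocks_conjTranspose, fromBlocks_multiply]⟩

theorem cle_diag_card {d : n → ℝ} {e : m → ℝ}
    (h : CLe (diagonal (fun i => (d i : ℂ))) (diagonal (fun i => (e i : ℂ)))) :
    Nat.card {i // 0 < d i} ≤ Nat.card {j // 0 < e j} := by
  obtain ⟨Z, hZ⟩ := h
  let ext : ({i // 0 < d i} → ℂ) →ₗ[ℂ] (n → ℂ) :=
    { toFun := fun x i => if hi : 0 < d i then x ⟨i, hi⟩ else 0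
      map_add' := by intro x y; ext i; by_cases hi : 0 < d i <;> simp [hi]
      map_smul' := by intro c x; ext i; by_cases hi : 0 < d i <;> simp [hi] }
  let f : ({i // 0 < d i} → ℂ) →ₗ[ℂ] ({j // 0 < e j} → ℂ) :=
    (LinearMap.funLeft ℂ ℂ (Subtype.val)) ∘ₗ Z.mulVecLin ∘ₗ ext
  have key : ∀ v : n → ℂ, ∑ i, d i * Complex.normSq (v i) = ∑ j, e j * Complex.normSq ((Z *ᵥ v) j) := by
    intro v
    have h1 : star v ⬝ᵥ (diagonal (fun i => (d i : ℂ)) *ᵥ v)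
        = star (Z *ᵥ v) ⬝ᵥ (diagonal (fun i => (e i : ℂ)) *ᵥ (Z *ᵥ v)) := by
      rw [hZ, star_mulVec, ← mulVec_mulVec, ← mulVec_mulVec, dotProduct_mulVec (star v)]
    have h2 : ∀ {p : Type _} [Fintype p] [DecidableEq p] (c : p → ℝ) (u : p → ℂ),
        star u ⬝ᵥ (diagonal (fun i => (c i : ℂ)) *ᵥ u) = ((∑ i, c i * Complex.normSq (u i) : ℝ) : ℂ) := by
      intro p _ _ c u
      simp only [dotProduct, mulVec_diagonal, Pi.star_apply]
      push_cast
      refine Finset.sum_congr rfl fun i _ => ?_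
      rw [Complex.normSq_eq_conj_mul_self]
      simp only [RCLike.star_def]; ring
    have h3 : ∀ {p : Type _} [Fintype p] [DecidableEq p] (c : p → ℝ) (u : p → ℂ),
        star u ⬝ᵥ (diagonal (fun i => (c i : ℂ)) *ᵥ u) = ((∑ i, c i * Complex.normSq (u i) : ℝ) : ℂ) := by
      intro p _ _ c u
      simp only [dotProduct, mulVec_diagonal, Pi.star_apply]
      push_cast
      refine Finset.sum_congr rfl fun i _ => ?_
      rw [Complex.normSq_eq_conj_mul_self]
      simp only [RCLike.star_def]; ring
    rw [h2 d v, h3 e] at h1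
    exact_mod_cast h1
  have hf : Function.Injective f := by
    rw [← LinearMap.ker_eq_bot, LinearMap.ker_eq_bot']
    intro x hx
    have hk := key (ext x)
    have hr : ∑ j, e j * Complex.normSq ((Z *ᵥ (ext x)) j) ≤ 0 := by
      refine Finset.sum_nonpos fun j _ => ?_
      by_cases hj : 0 < e j
      · have : (Z *ᵥ (ext x)) j = 0 := congrFun hx ⟨j, hj⟩
        simp [this]
      · exact mul_nonpos_of_nonpos_of_nonneg (not_lt.mp hj) (Complex.normSq_nonneg _)
    have hn : ∀ i ∈ Finset.univ, 0 ≤ d i * Complex.normSq (ext x i) := by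
      intro i _
      by_cases hi : 0 < d i
      · exact mul_nonneg hi.le (Complex.normSq_nonneg _)
      · simp [ext, hi]
    have hz := (Finset.sum_eq_zero_iff_of_nonneg hn).1
      (le_antisymm (hk ▸ hr) (Finset.sum_nonneg hn))
    ext ⟨i, hi⟩
    have := hz i (Finset.mem_univ _)
    simpa [ext, hi, hi.ne'] using this
  have := LinearMap.finrank_le_finrank_of_injective hf
  simpa [Nat.card_eq_fintype_card] using this

theorem spec (A : Matrix n n ℂ) (hA : A.IsHermitian) :
    A = (hA.eigenvectorUnitary : Matrix n n ℂ) * diagonal (fun i => (hA.eigenvalues i : ℂ)) *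
      (hA.eigenvectorUnitary : Matrix n n ℂ)ᴴ := by
  have := hA.spectral_theorem
  rw [Unitary.conjStarAlgAut_apply] at this
  exact this

theorem uni1 (A : Matrix n n ℂ) (hA : A.IsHermitian) :
    (hA.eigenvectorUnitary : Matrix n n ℂ)ᴴ * (hA.eigenvectorUnitary : Matrix n n ℂ) = 1 :=
  Unitary.coe_star_mul_self hA.eigenvectorUnitary

theorem cg_diag (A : Matrix n n ℂ) (hA : A.IsHermitian) :
    Cg A (diagonal (fun i => (hA.eigenvalues i : ℂ))) := by
  have h := spec A hA
  have u := uni1 A hA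
  generalize (hA.eigenvectorUnitary : Matrix n n ℂ) = U at h u
  generalize diagonal (fun i => (hA.eigenvalues i : ℂ)) = D at h
  refine ⟨⟨Uᴴ, by simpa using h⟩, ⟨U, ?_⟩⟩
  calc D = (Uᴴ * U) * D * (Uᴴ * U) := by simp [u]
    _ = _ := by rw [h]; simp only [Matrix.mul_assoc]

theorem Cg.trans {A : Matrix n n ℂ} {D : Matrix m m ℂ} {E : Matrix k k ℂ}
    (h : Cg A D) (h' : Cg D E) : Cg A E := ⟨h.1.trans h'.1, h'.2.trans h.2⟩

theorem Cg.symm {A : Matrix n n ℂ} {D : Matrix m m ℂ} (h : Cg A D) : Cg D A := ⟨h.2, h.1⟩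

theorem inertia_diag {A : Matrix n n ℂ} (hA : A.IsHermitian) {d : m → ℝ}
    (h : Cg A (diagonal (fun i => (d i : ℂ)))) :
    iPos A = Nat.card {i // 0 < d i} ∧ iNeg A = Nat.card {i // d i < 0} := by
  have h2 := (cg_diag A hA).symm.trans h
  rw [iPos, iNeg, dif_pos hA, dif_pos hA]
  refine ⟨le_antisymm (cle_diag_card h2.1) (cle_diag_card h2.2), ?_⟩
  have e : ∀ {p : Type _} [DecidableEq p] (c : p → ℝ),
    -(diagonal (fun i => (c i : ℂ))) = diagonal (fun i => ((-c i : ℝ) : ℂ)) := by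
    intro p _ c
    ext i j
    by_cases hij : i = j
    · subst hij; simp
    · simp [hij]
  have e' : ∀ {p : Type _} [DecidableEq p] (c : p → ℝ),
    -(diagonal (fun i => (c i : ℂ))) = diagonal (fun i => ((-c i : ℝ) : ℂ)) := by
    intro p _ c
    ext i j
    by_cases hij : i = j
    · subst hij; simp
    · simp [hij]
  have a1 := h2.1.neg
  have a2 := h2.2.neg
  rw [e, e'] at a1
  rw [e', e] at a2
  have b1 := cle_diag_card a1
  have b2 := cle_diag_card a2
  simp only [Left.neg_pos_iff] at b1 b2
  exact le_antisymm b1 b2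

theorem inertia_cg {A : Matrix n n ℂ} {D : Matrix m m ℂ} (hA : A.IsHermitian) (hD : D.IsHermitian)
    (h : Cg A D) : iPos A = iPos D ∧ iNeg A = iNeg D := by
  have h1 := inertia_diag hA (h.trans (cg_diag D hD))
  have h2 := inertia_diag hD (cg_diag D hD)
  exact ⟨h1.1.trans h2.1.symm, h1.2.trans h2.2.symm⟩

theorem inertia_blocks {A : Matrix n n ℂ} {D : Matrix m m ℂ} (hA : A.IsHermitian)
    (hD : D.IsHermitian) : iPos (fromBlocks A 0 0 D) = iPos A + iPos D ∧
      iNeg (fromBlocks A 0 0 D) = iNeg A + iNeg D := by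
  have hB : (fromBlocks A 0 0 D).IsHermitian := by
    rw [IsHermitian, fromBlocks_conjTranspose, hA.eq, hD.eq]; simp
  have h1 := cg_diag A hA
  have h2 := cg_diag D hD
  have h3 : Cg (fromBlocks A 0 0 D) (diagonal (fun i : n ⊕ m =>
      ((Sum.elim hA.eigenvalues hD.eigenvalues i : ℝ) : ℂ))) := by
    have : (diagonal (fun i : n ⊕ m => ((Sum.elim hA.eigenvalues hD.eigenvalues i : ℝ) : ℂ)))
      = fromBlocks (diagonal (fun i => (hA.eigenvalues i : ℂ))) 0 0
          (diagonal (fun i => (hD.eigenvalues i : ℂ))) := by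
      rw [fromBlocks_diagonal]; congr 1; ext i; cases i <;> rfl
    rw [this]
    exact ⟨h1.1.blocks h2.1, h1.2.blocks h2.2⟩
  have h4 := inertia_diag hB h3
  have c : ∀ p : ℝ → Prop, Nat.card {i : n ⊕ m // p (Sum.elim hA.eigenvalues hD.eigenvalues i)}
      = Nat.card {i // p (hA.eigenvalues i)} + Nat.card {i // p (hD.eigenvalues i)} := by
    intro p
    rw [← Nat.card_sum]
    exact Nat.card_congr Equiv.subtypeSum
  rw [h4.1, h4.2, c (fun x => 0 < x), c (fun x => x < 0)]
  simp only [iPos, iNeg, dif_pos hA, dif_pos hD, and_self]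

theorem inertia_neg {A : Matrix n n ℂ} (hA : A.IsHermitian) :
    iPos (-A) = iNeg A ∧ iNeg (-A) = iPos A := by
  have h1 := cg_diag A hA
  have h2 : Cg (-A) (diagonal (fun i => ((-hA.eigenvalues i : ℝ) : ℂ))) := by
    have : diagonal (fun i => ((-hA.eigenvalues i : ℝ) : ℂ)) =
      -(diagonal (fun i => (hA.eigenvalues i : ℂ))) := by
      ext i j
      by_cases hij : i = j
      · subst hij; simp
      · simp [hij]
    rw [this]
    exact ⟨h1.1.neg, h1.2.neg⟩
  have := inertia_diag hA.neg h2
  rw [this.1, this.2]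
  simp only [iPos, iNeg, dif_pos hA, Left.neg_pos_iff, Left.neg_neg_iff, and_self]

theorem inertia_rank {A : Matrix n n ℂ} (hA : A.IsHermitian) :
    iPos A + iNeg A = A.rank ∧ iPos A + iNeg A + iZero A = Fintype.card n := by
  classical
  rw [hA.rank_eq_card_non_zero_eigs]
  simp only [iPos, iNeg, iZero, dif_pos hA, Nat.card_eq_fintype_card, Fintype.card_subtype]
  have h1 : (Finset.univ.filter fun i => 0 < hA.eigenvalues i).card +
    (Finset.univ.filter fun i => hA.eigenvalues i < 0).card =
    (Finset.univ.filter fun i => hA.eigenvalues i ≠ 0).card := by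
    rw [← Finset.card_union_of_disjoint]
    · congr 1; ext i; simp only [Finset.mem_union, Finset.mem_filter, Finset.mem_univ, true_and]
      rw [← lt_or_lt_iff_ne, or_comm]
    · rw [Finset.disjoint_filter]; intro i _ h; exact not_lt.2 h.le
  refine ⟨h1, ?_⟩
  rw [h1, add_comm]
  exact Finset.card_filter_add_card_filter_not _

theorem pinv_props {A : Matrix n n ℂ} (hA : A.IsHermitian) :
    A * pinvH A * A = A ∧ pinvH A * A * pinvH A = pinvH A ∧ (pinvH A)ᴴ = pinvH A ∧
      pinvH A * A = A * pinvH A := by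
  have h := spec A hA
  have u := uni1 A hA
  have hp : pinvH A = (hA.eigenvectorUnitary : Matrix n n ℂ) *
      Matrix.diagonal (fun i => if hA.eigenvalues i = 0 then 0 else ((hA.eigenvalues i : ℂ))⁻¹) *
      (hA.eigenvectorUnitary : Matrix n n ℂ)ᴴ := by
    rw [pinvH, dif_pos hA]; rfl
  have d1 : diagonal (fun i => (hA.eigenvalues i : ℂ)) *
    Matrix.diagonal (fun i => if hA.eigenvalues i = 0 then 0 else ((hA.eigenvalues i : ℂ))⁻¹) *
    diagonal (fun i => (hA.eigenvalues i : ℂ)) = diagonal (fun i => (hA.eigenvalues i : ℂ)) := by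
    simp only [diagonal_mul_diagonal]; congr 1; ext i; split_ifs with h0 <;> simp [h0]
  have d2 : Matrix.diagonal (fun i => if hA.eigenvalues i = 0 then 0 else ((hA.eigenvalues i : ℂ))⁻¹) *
    diagonal (fun i => (hA.eigenvalues i : ℂ)) * 
    Matrix.diagonal (fun i => if hA.eigenvalues i = 0 then 0 else ((hA.eigenvalues i : ℂ))⁻¹) =
    Matrix.diagonal (fun i => if hA.eigenvalues i = 0 then 0 else ((hA.eigenvalues i : ℂ))⁻¹) := by
    simp only [diagonal_mul_diagonal]; congr 1; ext i; split_ifs with h0 <;> simp [h0]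
  have d3 : (Matrix.diagonal (fun i => if hA.eigenvalues i = 0 then 0
      else ((hA.eigenvalues i : ℂ))⁻¹))ᴴ =
    Matrix.diagonal (fun i => if hA.eigenvalues i = 0 then 0 else ((hA.eigenvalues i : ℂ))⁻¹) := by
    rw [diagonal_conjTranspose]; congr 1; ext i; simp only [Pi.star_apply]
    split_ifs with h0 <;> simp
  have d4 : Matrix.diagonal (fun i => if hA.eigenvalues i = 0 then 0 else ((hA.eigenvalues i : ℂ))⁻¹) *
    diagonal (fun i => (hA.eigenvalues i : ℂ)) = diagonal (fun i => (hA.eigenvalues i : ℂ)) *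
    Matrix.diagonal (fun i => if hA.eigenvalues i = 0 then 0 else ((hA.eigenvalues i : ℂ))⁻¹) := by
    simp only [diagonal_mul_diagonal]; congr 1; ext i; ring
  generalize (hA.eigenvectorUnitary : Matrix n n ℂ) = U at h u hp
  generalize diagonal (fun i => (hA.eigenvalues i : ℂ)) = D at h d1 d2 d3 d4
  generalize Matrix.diagonal (fun i => if hA.eigenvalues i = 0 then 0
    else ((hA.eigenvalues i : ℂ))⁻¹) = F at hp d1 d2 d3 d4
  have hpi : ∀ X Y : Matrix n n ℂ, (U * X * Uᴴ) * (U * Y * Uᴴ) = U * (X * Y) * Uᴴ := by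
    intro X Y
    calc _ = U * X * (Uᴴ * U) * Y * Uᴴ := by simp only [Matrix.mul_assoc]
      _ = _ := by rw [u]; simp only [Matrix.mul_assoc, Matrix.one_mul]
  rw [hp]
  clear hp
  subst h
  refine ⟨?_, ?_, ?_, ?_⟩
  · rw [hpi, hpi, d1]
  · rw [hpi, hpi, d2]
  · simp [d3, Matrix.mul_assoc]
  · rw [hpi, hpi, d4]

theorem cg_of {M : Matrix n n ℂ} {D : Matrix m m ℂ} {E : Matrix k k ℂ}
    (Y₁ : Matrix m n ℂ) (Y₂ : Matrix k n ℂ) (Z₁ : Matrix n m ℂ) (Z₂ : Matrix n k ℂ)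
    (hM : M.IsHermitian)
    (h : M = Y₁ᴴ * D * Y₁ + Y₂ᴴ * E * Y₂) (h1 : D = Z₁ᴴ * M * Z₁) (h2 : E = Z₂ᴴ * M * Z₂)
    (h12 : Z₁ᴴ * M * Z₂ = 0) : Cg M (fromBlocks D 0 0 E) := by
  have h21 : Z₂ᴴ * M * Z₁ = 0 := by
    have := congrArg conjTranspose h12
    simpa [hM.eq, Matrix.mul_assoc] using this
  refine ⟨⟨fromRows Y₁ Y₂, ?_⟩, ⟨fromCols Z₁ Z₂, ?_⟩⟩
  · rw [conjTranspose_fromRows_eq_fromCols_conjTranspose, fromCols_mul_fromBlocks,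
      fromCols_mul_fromRows]
    simpa using h
  · rw [conjTranspose_fromCols_eq_fromRows_conjTranspose, fromRows_mul, fromRows_mul_fromCols,
      h12, h21, ← h1, ← h2]

theorem ra {X : Matrix m n ℂ} {Y : Matrix n k ℂ} {Z : Matrix m k ℂ} (h : X * Y = Z)
    {q : Type*} (K : Matrix k q ℂ) : X * (Y * K) = Z * K := by
  rw [← h, Matrix.mul_assoc]

theorem ra3 {X : Matrix m n ℂ} {Y : Matrix n k ℂ} {Z : Matrix k l ℂ} {T : Matrix m l ℂ}
    (h : X * (Y * Z) = T)
    {q : Type*} (K : Matrix l q ℂ) : X * (Y * (Z * K)) = T * K := by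
  rw [← h]; simp only [Matrix.mul_assoc]

theorem colsq {q : Type*} [Fintype q] (a : Matrix m n ℂ) (b : Matrix m q ℂ) (D : Matrix m m ℂ) :
    (fromCols a b)ᴴ * D * fromCols a b =
      fromBlocks (aᴴ * D * a) (aᴴ * D * b) (bᴴ * D * a) (bᴴ * D * b) := by
  rw [conjTranspose_fromCols_eq_fromRows_conjTranspose, fromRows_mul, fromRows_mul_fromCols]

theorem step1 {Ω : Matrix n n ℂ} {A A' : Matrix m m ℂ} {B : Matrix m n ℂ}
    (hA : Aᴴ = A) (hA' : A'ᴴ = A') (h1 : A * (A' * A) = A) (h2 : A' * (A * A') = A')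
    (h3 : A' * A = A * A') (hB : Bᴴ * (A * A') = Bᴴ) (hM : (fromBlocks Ω Bᴴ B A).IsHermitian) :
    Cg (fromBlocks Ω Bᴴ B A) (fromBlocks (Ω - Bᴴ * A' * B) 0 0 A) := by
  have hB' : A * (A' * B) = B := by
    have := congrArg conjTranspose hB
    simp only [conjTranspose_mul, hA, hA', conjTranspose_conjTranspose] at this
    rw [← Matrix.mul_assoc, ← h3]; exact this
  have hB3 : Bᴴ * (A' * A) = Bᴴ := by rw [h3, hB]
  refine cg_of (fromCols 1 0) (fromCols (A' * B) 1) (fromRows 1 (-(A' * B))) (fromRows 0 1)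
    hM ?_ ?_ ?_ ?_
  · simp only [colsq, fromBlocks_add]
    simp [hA', Matrix.mul_assoc, hB', hB3]
  · simp only [conjTranspose_fromRows_eq_fromCols_conjTranspose, fromCols_mul_fromBlocks,
      fromCols_mul_fromRows]
    simp [hA', Matrix.mul_assoc, hB', Matrix.mul_add, Matrix.add_mul]
    abel
  · simp only [conjTranspose_fromRows_eq_fromCols_conjTranspose, fromCols_mul_fromBlocks,
      fromCols_mul_fromRows]
    simp
  · simp only [conjTranspose_fromRows_eq_fromCols_conjTranspose, fromCols_mul_fromBlocks,
      fromCols_mul_fromRows]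
    simp [hA', Matrix.mul_assoc, hB3]

theorem step2 {Ω Ω' P : Matrix n n ℂ} {A : Matrix m m ℂ} {B : Matrix m n ℂ}
    (hΩ : Ωᴴ = Ω) (hΩ' : Ω'ᴴ = Ω') (h1 : Ω * (Ω' * Ω) = Ω) (h2 : Ω' * (Ω * Ω') = Ω')
    (h3 : Ω' * Ω = Ω * Ω') (hP : P = 1 - Ω' * Ω) (hM : (fromBlocks Ω Bᴴ B A).IsHermitian) :
    Cg (fromBlocks Ω Bᴴ B A) (fromBlocks Ω 0 0
      (fromBlocks 0 (P * Bᴴ) (B * P) (A - B * Ω' * Bᴴ))) := by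
  have hPH : Pᴴ = P := by rw [hP]; simp [hΩ, hΩ', h3]
  have e1 : Ω * P = 0 := by rw [hP, Matrix.mul_sub, h1]; simp
  have e2 : P * Ω = 0 := by rw [hP, h3, Matrix.sub_mul, Matrix.mul_assoc, h1]; simp
  have e3 : P * Ω' = 0 := by rw [hP, Matrix.sub_mul, Matrix.mul_assoc, h2]; simp
  have e4 : Ω' * P = 0 := by rw [hP, h3, Matrix.mul_sub, h2]; simp
  have e5 : Ω * Ω' = 1 - P := by rw [hP, ← h3]; simp
  have e6 : Ω' * Ω = 1 - P := by rw [hP]; simp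
  have e7 : P * P = P := by nth_rewrite 2 [hP]; rw [Matrix.mul_sub, ← Matrix.mul_assoc, e3]; simp
  refine cg_of (fromCols 1 (Ω' * Bᴴ)) 1 (fromRows (1 - P) 0)
    (fromBlocks P (-(Ω' * Bᴴ)) 0 1) hM ?_ ?_ ?_ ?_
  · simp only [colsq, fromBlocks_add, conjTranspose_one, Matrix.one_mul, Matrix.mul_one]
    simp [hΩ', Matrix.mul_assoc, ra e5, ra e6, e5, e6, Matrix.mul_sub, Matrix.sub_mul, ra e3,
      ra e4, e3, e4]
  · simp only [conjTranspose_fromRows_eq_fromCols_conjTranspose, fromCols_mul_fromBlocks,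
      fromCols_mul_fromRows]
    simp [hPH, Matrix.mul_assoc, Matrix.mul_sub, Matrix.sub_mul, e1, e2]
  · simp only [fromBlocks_conjTranspose, fromBlocks_multiply]
    congr 1
    · simp [hPH, e1, e2]
    · simp [hPH, e1, e2]
    · simp [hΩ', Matrix.mul_assoc, e6, e7, Matrix.mul_sub, Matrix.sub_mul]
    · simp [hΩ', Matrix.mul_assoc, Matrix.mul_add, Matrix.add_mul, ra e5, ra e6, Matrix.sub_mul,
        Matrix.mul_sub, ra e3, ra e4]
      try abel
  · simp only [conjTranspose_fromRows_eq_fromCols_conjTranspose, fromCols_mul_fromBlocks]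
    simp [hPH, Matrix.mul_assoc, Matrix.mul_sub, Matrix.sub_mul, e1, e2, ra e5, ra e2, ra e3, e7,
      ra e7]
    

theorem step3 {C : Matrix m n ℂ} {D G G' : Matrix m m ℂ} {V : Matrix m k ℂ}
    (hD : Dᴴ = D) (hG : G = C * Cᴴ) (hG' : G'ᴴ = G') (hc : G' * G = G * G')
    (hV : Vᴴ * V = 1) (hR : G * G' = 1 - V * Vᴴ) (hCV : Cᴴ * V = 0) :
    Cg (fromBlocks 0 Cᴴ C D) (fromBlocks (fromBlocks 0 Cᴴ C 0) 0 0 (Vᴴ * D * V)) := by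
  have hVC : Vᴴ * C = 0 := by simpa using congrArg conjTranspose hCV
  obtain ⟨R, hRd⟩ : ∃ R, R = 1 - V * Vᴴ := ⟨_, rfl⟩
  have hRH : Rᴴ = R := by rw [hRd]; simp
  have r1 : R * V = 0 := by rw [hRd, Matrix.sub_mul, Matrix.mul_assoc, hV]; simp
  have r2 : Vᴴ * R = 0 := by simpa [hRH] using congrArg conjTranspose r1
  have r3 : Cᴴ * R = Cᴴ := by rw [hRd, Matrix.mul_sub, ← Matrix.mul_assoc, hCV]; simp
  have r4 : R * C = C := by simpa [hRH] using congrArg conjTranspose r3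
  have r5 : R * R = R := by
    nth_rewrite 2 [hRd]; rw [Matrix.mul_sub, ← Matrix.mul_assoc, r1]; simp
  obtain ⟨F, hF⟩ : ∃ F, F = D * (V * Vᴴ) + (1 / 2 : ℂ) • (D * R) := ⟨_, rfl⟩
  obtain ⟨E, hE⟩ : ∃ E, E = Cᴴ * G' * F := ⟨_, rfl⟩
  have c1 : C * E = R * F := by
    rw [hE, hRd, ← hR, hG]; simp only [Matrix.mul_assoc]
  have c2 : Eᴴ * Cᴴ = Fᴴ * R := by simpa [hRH] using congrArg conjTranspose c1
  have hFH : Fᴴ = (V * Vᴴ) * D + (1 / 2 : ℂ) • (R * D) := by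
    rw [hF]; simp [hRH, hD, Matrix.mul_assoc]
  have hDd : D = V * (Vᴴ * D * V) * Vᴴ + R * F + Fᴴ * R := by
    have hvv : V * Vᴴ = 1 - R := by rw [hRd]; simp
    have : V * (Vᴴ * D * V) * Vᴴ = (V * Vᴴ) * D * (V * Vᴴ) := by simp only [Matrix.mul_assoc]
    rw [this, hFH, hF, hvv]
    simp only [Matrix.mul_sub, Matrix.sub_mul, Matrix.mul_add, Matrix.add_mul, Matrix.mul_one,
      Matrix.one_mul, Matrix.mul_smul, Matrix.smul_mul, Matrix.mul_assoc]
    module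
  have hM : (fromBlocks 0 Cᴴ C D).IsHermitian := by
    rw [IsHermitian, fromBlocks_conjTranspose, hD]; simp
  have hVFV : Vᴴ * (Fᴴ * (R * V)) = 0 := by rw [r1]; simp
  refine cg_of (fromBlocks 1 E 0 1) (fromCols 0 Vᴴ) (fromBlocks 1 (-(E * R)) 0 R)
    (fromRows (-(E * V)) V) hM ?_ ?_ ?_ ?_
  · simp only [colsq, fromBlocks_add, fromBlocks_conjTranspose, fromBlocks_multiply]
    congr 1
    · simp
    · simp
    · simp
    · simp [c1, c2]
      nth_rewrite 1 [hDd]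
      simp only [Matrix.mul_assoc]
      abel
  · simp only [fromBlocks_conjTranspose, fromBlocks_multiply]
    congr 1
    · simp
    · simp [r3]
    · simp [hRH, r4]
    · have : R * D * R = R * (R * F) * R + R * (Fᴴ * R) * R := by
        nth_rewrite 1 [hDd]
        simp [Matrix.mul_add, Matrix.add_mul, Matrix.mul_assoc, ra r1]
      simp only [Matrix.mul_assoc] at this
      simp [hRH, Matrix.mul_assoc, Matrix.mul_add, Matrix.add_mul, ra c1, ra c2, this]
  · simp only [conjTranspose_fromRows_eq_fromCols_conjTranspose, fromCols_mul_fromBlocks,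
      fromCols_mul_fromRows]
    simp [hCV, Matrix.mul_assoc, ra hVC, Matrix.mul_add, Matrix.add_mul]
  · simp only [fromBlocks_conjTranspose, fromBlocks_multiply, fromBlocks_mul_fromRows]
    have : R * (D * V) = R * (F * V) := by
      nth_rewrite 1 [hDd]
      simp [Matrix.mul_add, Matrix.add_mul, Matrix.mul_assoc, ra r1, r1, ra r5]
    have a1 : -(Rᴴ * (C * (E * V))) + R * (D * V) = 0 := by
      rw [ra c1, hRH, Matrix.mul_assoc, ra r5, this]; simp
    simp [hCV, hRH, Matrix.mul_assoc, Matrix.mul_add, Matrix.add_mul] 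
    rw [hRH] at a1
    rw [a1]; simp

theorem step4 {C : Matrix m n ℂ} {G G' : Matrix m m ℂ} 
    (hG : G = C * Cᴴ) (hG' : G'ᴴ = G') (hc : G' * G = G * G') (hr : Cᴴ * (G * G') = Cᴴ) :
    Cg (fromBlocks 0 Cᴴ C 0) (fromBlocks G 0 0 (-G)) := by
  have hGH : Gᴴ = G := by rw [hG]; simp
  have hr2 : Cᴴ * (G' * G) = Cᴴ := by rw [hc, hr]
  have hr' : G * (G' * C) = C := by
    simpa [hGH, hG', Matrix.mul_assoc] using congrArg conjTranspose hr2
  have hM : (fromBlocks 0 Cᴴ C (0 : Matrix m m ℂ)).IsHermitian := by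
    rw [IsHermitian, fromBlocks_conjTranspose]; simp
  refine cg_of (fromCols (G' * C) ((1 / 2 : ℂ) • 1)) (fromCols (G' * C) (-((1 / 2 : ℂ) • 1)))
    (fromRows ((1 / 2 : ℂ) • Cᴴ) 1) (fromRows ((1 / 2 : ℂ) • Cᴴ) (-1)) hM ?_ ?_ ?_ ?_
  · simp only [colsq, fromBlocks_add]
    congr 1
    · simp
    · simp [hG', Matrix.mul_assoc, hr2]; module
    · simp [hG', Matrix.mul_assoc, hr']; module
    · simp
  · simp only [conjTranspose_fromRows_eq_fromCols_conjTranspose, fromCols_mul_fromBlocks,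
      fromCols_mul_fromRows]
    simp [← hG]; module
  · simp only [conjTranspose_fromRows_eq_fromCols_conjTranspose, fromCols_mul_fromBlocks,
      fromCols_mul_fromRows]
    simp [← hG]; module
  · simp only [conjTranspose_fromRows_eq_fromCols_conjTranspose, fromCols_mul_fromBlocks,
      fromCols_mul_fromRows]
    simp [← hG]

end helpers

/-- Lemma 3.1 of the paper: index formulas for `W = Ω − B*A⁺B` in terms of the inertias
of `Ω`, `A` and of the compression `S` of `A − BΩ⁺B*` to `𝒬 = Null(BPB*)` (realized via
any matrix `V` whose columns form an orthonormal basis of `𝒬`), with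
`i_∞(S) = rank(BPB*) = N − dim 𝒬`. -/
theorem index_formulas_for_W
    (d N m : ℕ)
    (Ω : Matrix (Fin d) (Fin d) ℂ) (hΩ : Ω.IsHermitian)
    (A : Matrix (Fin N) (Fin N) ℂ) (hA : A.IsHermitian)
    (B : Matrix (Fin N) (Fin d) ℂ)
    (hker : ∀ x : Fin N → ℂ, A.mulVec x = 0 → Bᴴ.mulVec x = 0)
    (W : Matrix (Fin d) (Fin d) ℂ) (hW : W = Ω - Bᴴ * pinvH A * B)
    (P : Matrix (Fin d) (Fin d) ℂ) (hP : P = nullProj Ω)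
    (V : Matrix (Fin N) (Fin m) ℂ) (hV : Vᴴ * V = 1)
    (hVrange : LinearMap.range V.mulVecLin = LinearMap.ker (B * P * Bᴴ).mulVecLin)
    (S : Matrix (Fin m) (Fin m) ℂ) (hS : S = Vᴴ * (A - B * pinvH Ω * Bᴴ) * V)
    (iinf : ℕ) (hiinf : iinf = (B * P * Bᴴ).rank) :
    iinf = N - m ∧
    (iNeg W : ℤ) = iNeg Ω + iNeg S + iinf - iNeg A ∧
    (iZero W : ℤ) = iZero Ω + iZero S - iinf - iZero A ∧
    (iPos W : ℤ) = iPos Ω + iPos S + iinf - iPos A ∧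
    (iPos W : ℤ) = iPos Ω - iNeg S - iZero S + iNeg A + iZero A := by
  have pΩ := pinv_props hΩ
  have pA := pinv_props hA
  simp only [Matrix.mul_assoc] at pΩ pA
  obtain ⟨o1, o2, o3, o4⟩ := pΩ
  obtain ⟨a1, a2, a3, a4⟩ := pA
  rw [nullProj] at hP
  -- projection facts
  have hPH : Pᴴ = P := by rw [hP]; simp [hΩ.eq, o3, o4]
  have hPP : P * P = P := by
    nth_rewrite 2 [hP]
    rw [Matrix.mul_sub, ← Matrix.mul_assoc]
    have : P * pinvH Ω = 0 := by rw [hP, Matrix.sub_mul, Matrix.mul_assoc, o2]; simp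
    rw [this]; simp
  obtain ⟨C, hC⟩ : ∃ C, C = B * P := ⟨_, rfl⟩
  have hCH : Cᴴ = P * Bᴴ := by rw [hC]; simp [hPH]
  obtain ⟨G, hG⟩ : ∃ G, G = B * P * Bᴴ := ⟨_, rfl⟩
  have hGC : G = C * Cᴴ := by
    rw [hG, hCH, hC]
    calc B * P * Bᴴ = B * (P * P) * Bᴴ := by rw [hPP]
      _ = _ := by simp only [Matrix.mul_assoc]
  have hGH : G.IsHermitian := by rw [IsHermitian, hGC]; simp
  rw [← hG] at hVrange hiinf
  have pG := pinv_props hGH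
  simp only [Matrix.mul_assoc] at pG
  obtain ⟨g1, g2, g3, g4⟩ := pG
  have hGV : G * V = 0 := by
    ext i j
    have h1 : V.mulVecLin (Pi.single j 1) ∈ LinearMap.ker G.mulVecLin := by
      rw [← hVrange]; exact ⟨_, rfl⟩
    have h2 := congrFun (LinearMap.mem_ker.1 h1) i
    rw [mulVecLin_apply, mulVecLin_apply, mulVec_mulVec, mulVec_single_one] at h2
    exact h2
  have hCV : Cᴴ * V = 0 := by
    rw [hGC] at hGV
    exact (Matrix.self_mul_conjTranspose_mul_eq_zero C V).1 hGV
  have hK : V * Vᴴ * (1 - pinvH G * G) = 1 - pinvH G * G := by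
    have hz : G * (1 - pinvH G * G) = 0 := by rw [Matrix.mul_sub, g1]; simp
    refine Matrix.ext_of_mulVec_single fun j => ?_
    have h1 : (1 - pinvH G * G) *ᵥ Pi.single j 1 ∈ LinearMap.range V.mulVecLin := by
      rw [hVrange, LinearMap.mem_ker, mulVecLin_apply, mulVec_mulVec, hz, zero_mulVec]
    obtain ⟨y, hy⟩ := h1
    rw [mulVecLin_apply] at hy
    rw [← mulVec_mulVec, ← hy, mulVec_mulVec, Matrix.mul_assoc, hV, Matrix.mul_one]
  have hR : G * pinvH G = 1 - V * Vᴴ := by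
    have h1 := congrArg conjTranspose hK
    simp only [conjTranspose_mul, conjTranspose_sub, conjTranspose_one, hGH.eq, g3,
      conjTranspose_conjTranspose] at h1
    rw [← g4, Matrix.sub_mul, Matrix.one_mul, Matrix.mul_assoc, ← Matrix.mul_assoc G, hGV] at h1
    simp only [Matrix.zero_mul, Matrix.mul_zero, sub_zero] at h1
    rw [h1, g4]; simp
  have hr : Cᴴ * (G * pinvH G) = Cᴴ := by
    rw [hR, Matrix.mul_sub, ← Matrix.mul_assoc, hCV]; simp
  have hB : Bᴴ * (A * pinvH A) = Bᴴ := by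
    have hz : A * (1 - pinvH A * A) = 0 := by rw [Matrix.mul_sub, a1]; simp
    have : Bᴴ * (1 - pinvH A * A) = 0 := by
      refine Matrix.ext_of_mulVec_single fun j => ?_
      rw [← mulVec_mulVec, hker, zero_mulVec]
      rw [mulVec_mulVec, hz, zero_mulVec]
    rw [Matrix.mul_sub, Matrix.mul_one, sub_eq_zero, a4] at this
    exact this.symm
  have hM : (fromBlocks Ω Bᴴ B A).IsHermitian := by
    rw [IsHermitian, fromBlocks_conjTranspose, hΩ.eq, hA.eq]; simp
  obtain ⟨D, hD⟩ : ∃ D, D = A - B * pinvH Ω * Bᴴ := ⟨_, rfl⟩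
  have hDH : Dᴴ = D := by rw [hD]; simp [hA.eq, o3, Matrix.mul_assoc]
  have s1 := step1 (Ω := Ω) hA.eq a3 a1 a2 a4 hB hM
  have s2 := step2 (A := A) (B := B) hΩ.eq o3 o1 o2 o4 hP hM
  have s3 := step3 hDH hGC g3 g4 hV hR hCV
  have s4 := step4 hGC g3 g4 hr
  rw [← hW] at s1
  rw [← hD, ← hC, ← hCH] at s2
  rw [← hD] at hS
  rw [← hS] at s3
  have hWH : W.IsHermitian := by
    rw [IsHermitian, hW]; simp [hΩ.eq, a3, Matrix.mul_assoc]
  have hSH : S.IsHermitian := by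
    rw [IsHermitian, hS]; simp [hDH, Matrix.mul_assoc]
  have bl : ∀ {p q : Type} [Fintype p] [Fintype q] [DecidableEq p] [DecidableEq q]
      {X : Matrix p p ℂ} {Y : Matrix q q ℂ}, X.IsHermitian → Y.IsHermitian →
      (fromBlocks X 0 0 Y).IsHermitian := by
    intro p q _ _ _ _ X Y hX hY
    rw [IsHermitian, fromBlocks_conjTranspose, hX.eq, hY.eq]; simp
  have hT : (fromBlocks 0 Cᴴ C D).IsHermitian := by
    rw [IsHermitian, fromBlocks_conjTranspose, hDH]; simp
  have hH : (fromBlocks 0 Cᴴ C (0 : Matrix (Fin N) (Fin N) ℂ)).IsHermitian := by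
    rw [IsHermitian, fromBlocks_conjTranspose]; simp
  have i1 := inertia_cg hM (bl hWH hA) s1
  have i2 := inertia_cg hM (bl hΩ hT) s2
  have i3 := inertia_cg hT (bl hH hSH) s3
  have i4 := inertia_cg hH (bl hGH hGH.neg) s4
  have b1 := inertia_blocks hWH hA
  have b2 := inertia_blocks hΩ hT
  have b3 := inertia_blocks hH hSH
  have b4 := inertia_blocks hGH hGH.neg
  have ng := inertia_neg hGH
  have rG := (inertia_rank hGH).1
  have rW := (inertia_rank hWH).2
  have rΩ := (inertia_rank hΩ).2
  have rA := (inertia_rank hA).2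
  have rS := (inertia_rank hSH).2
  simp only [Fintype.card_fin] at rW rΩ rA rS
  have hdim : G.rank + m = N := by
    have h1 := LinearMap.finrank_range_add_finrank_ker G.mulVecLin
    have hinj : Function.Injective V.mulVecLin := by
      intro x y hxy
      have := congrArg (fun z => Vᴴ *ᵥ z) hxy
      simpa [mulVec_mulVec, hV] using this
    rw [← hVrange, LinearMap.finrank_range_of_inj hinj] at h1
    simpa [Matrix.rank] using h1
  omega
end
end

section
/- Let W be a 3×3 Hermitian matrix with det W = 0. If the real part Re W (the entrywise real part, a real symmetric matrix) is positive definite, then W is positive semidefinite. -/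
noncomputable section

open Matrix Complex
open scoped ComplexOrder

lemma aux_ineq (a b c d e f p q r : ℝ)
    (hA : ∀ x y z : ℝ, 0 ≤ a*x^2 + b*y^2 + c*z^2 + 2*(d*x*y + e*x*z + f*y*z))
    (D : ℝ) (hD : D = a*b*c + 2*d*e*f - a*f^2 - b*e^2 - c*d^2) (hpos : 0 < D)
    (hdet : a*p^2 + b*q^2 + c*r^2 + 2*(d*p*q + e*p*r + f*q*r) = D)
    (x1 x2 x3 y1 y2 y3 : ℝ) :
    0 ≤ (a*x1^2 + b*x2^2 + c*x3^2 + 2*(d*x1*x2 + e*x1*x3 + f*x2*x3))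
      + (a*y1^2 + b*y2^2 + c*y3^2 + 2*(d*y1*y2 + e*y1*y3 + f*y2*y3))
      + 2*(p*(x2*y3-x3*y2) + q*(x3*y1-x1*y3) + r*(x1*y2-x2*y1)) := by
  have h1 := hA x1 x2 x3
  have h2 := hA y1 y2 y3
  obtain ⟨u, hu⟩ : ∃ u, u = x2*y3-x3*y2 := ⟨_, rfl⟩
  obtain ⟨v, hv⟩ : ∃ v, v = x3*y1-x1*y3 := ⟨_, rfl⟩
  obtain ⟨w, hw⟩ : ∃ w, w = x1*y2-x2*y1 := ⟨_, rfl⟩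
  have hs : (p*u+q*v+r*w)^2 ≤ (b*c-f^2)*u^2 + (a*c-e^2)*v^2 + (a*b-d^2)*w^2
      + 2*((e*f-c*d)*u*v + (d*f-b*e)*u*w + (d*e-a*f)*v*w) := by
    have h3 := hA ((b*c-f^2)*u + (e*f-c*d)*v + (d*f-b*e)*w - (p*u+q*v+r*w)*p)
      ((e*f-c*d)*u + (a*c-e^2)*v + (d*e-a*f)*w - (p*u+q*v+r*w)*q)
      ((d*f-b*e)*u + (d*e-a*f)*v + (a*b-d^2)*w - (p*u+q*v+r*w)*r)
    rw [← sub_nonneg]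
    refine nonneg_of_mul_nonneg_right ?_ hpos
    refine h3.trans_eq ?_
    linear_combination (-((b*c-f^2)*u^2 + (a*c-e^2)*v^2 + (a*b-d^2)*w^2
      + 2*((e*f-c*d)*u*v + (d*f-b*e)*u*w + (d*e-a*f)*v*w)) + 2*(p*u+q*v+r*w)^2) * hD
      + (p*u+q*v+r*w)^2 * hdet
  rw [← hu, ← hv, ← hw]
  have key : (p*u+q*v+r*w)^2 ≤ (a*x1^2 + b*x2^2 + c*x3^2 + 2*(d*x1*x2 + e*x1*x3 + f*x2*x3))
      * (a*y1^2 + b*y2^2 + c*y3^2 + 2*(d*y1*y2 + e*y1*y3 + f*y2*y3)) := by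
    refine hs.trans ?_
    have := sq_nonneg (a*x1*y1 + b*x2*y2 + c*x3*y3 + d*(x1*y2+x2*y1) + e*(x1*y3+x3*y1)
      + f*(x2*y3+x3*y2))
    rw [← sub_nonneg]
    refine this.trans_eq ?_
    rw [hu, hv, hw]
    ring
  generalize p*u+q*v+r*w = s at *
  generalize a*x1^2 + b*x2^2 + c*x3^2 + 2*(d*x1*x2 + e*x1*x3 + f*x2*x3) = P at *
  generalize a*y1^2 + b*y2^2 + c*y3^2 + 2*(d*y1*y2 + e*y1*y3 + f*y2*y3) = Q at *
  have : |2*s| ≤ P + Q := abs_le_of_sq_le_sq (by nlinarith [sq_nonneg (P-Q)]) (by linarith)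
  linarith [(abs_le.mp this).1]

/-- Lemma 4.7 of the paper: a `3×3` Hermitian matrix with zero determinant whose
entrywise real part is positive definite is positive semidefinite. -/
theorem three_by_three_posSemidef_of_re_posDef
    (W : Matrix (Fin 3) (Fin 3) ℂ) (hW : W.IsHermitian) (hdet : W.det = 0)
    (hre : (W.map Complex.re).PosDef) :
    W.PosSemidef := by
  have h00 := hW.apply 0 0
  have h11 := hW.apply 1 1
  have h22 := hW.apply 2 2
  have h01 := hW.apply 0 1
  have h02 := hW.apply 0 2
  have h12 := hW.apply 1 2
  simp only [Complex.ext_iff, star_def, conj_re, conj_im] at h00 h11 h22 h01 h02 h12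
  have e0 : (W 0 0).im = 0 := by linarith [h00.2]
  have e1 : (W 1 1).im = 0 := by linarith [h11.2]
  have e2 : (W 2 2).im = 0 := by linarith [h22.2]
  have hd := hre.det_pos
  have hd2 := congrArg Complex.re hdet
  rw [Matrix.det_fin_three] at hd hd2
  simp only [Matrix.map_apply, h01.1, h02.1, h12.1] at hd
  simp only [sub_re, add_re, mul_re, mul_im, zero_re, h01.1, h02.1, h12.1, ← h01.2, ← h02.2,
    ← h12.2, e0, e1, e2] at hd2
  have hx := aux_ineq (W 0 0).re (W 1 1).re (W 2 2).re (W 0 1).re (W 0 2).re (W 1 2).re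
    ((W 2 1).im) (-(W 2 0).im) ((W 1 0).im) (by
      intro x y z
      have := hre.posSemidef.dotProduct_mulVec_nonneg ![x, y, z]
      simp [dotProduct, mulVec, Fin.sum_univ_three, h01.1, h02.1, h12.1] at this
      linarith) _ rfl (by linarith) (by linarith)
  refine Matrix.PosSemidef.of_dotProduct_mulVec_nonneg hW fun z => ?_
  rw [Complex.le_def]
  constructor
  · have := hx (z 0).re (z 1).re (z 2).re (z 0).im (z 1).im (z 2).im
    simp [dotProduct, mulVec, Fin.sum_univ_three, h01.1, h02.1, h12.1, ← h01.2, ← h02.2,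
      ← h12.2, e0, e1, e2]
    linarith
  · simp [dotProduct, mulVec, Fin.sum_univ_three, h01.1, h02.1, h12.1, ← h01.2, ← h02.2,
      ← h12.2, e0, e1, e2]
    ring
end
end

section
/- (Generalized Haynsworth formula.) Let M be a Hermitian matrix in block form M = [[A, B], [B*, C]], where A is N×N Hermitian, C is d×d Hermitian, and B is N×d. Let P be the orthogonal projection onto Null(A), let 𝒬 = Null(B*PB) ⊆ ℂ^d, and set i_∞ = rank(B*PB) = d − dim 𝒬. Let M/A := C − B*A⁺B be the generalized Schur complement, where ⁺ denotes the Moore–Penrose pseudoinverse, and let In_𝒬(M/A) denote the inertia of the restriction of M/A to 𝒬 (i.e. of Q(M/A)Q* viewed as an operator on 𝒬, with Q the orthogonal projection onto 𝒬). Then In(M) = In(A) + In_𝒬(M/A) + (i_∞, i_∞, −i_∞). -/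
noncomputable section

open Matrix Complex
open scoped ComplexOrder

section
variable {n : Type*} [Fintype n] [DecidableEq n]

/-- diagonalisation in product form -/
theorem gh_spec {A : Matrix n n ℂ} (hA : A.IsHermitian) :
    A = (hA.eigenvectorUnitary : Matrix n n ℂ) *
      diagonal (fun i => (hA.eigenvalues i : ℂ)) * (hA.eigenvectorUnitary : Matrix n n ℂ)ᴴ := by
  have := hA.spectral_theorem
  rw [Unitary.conjStarAlgAut_apply] at this
  exact this

theorem gh_UU {A : Matrix n n ℂ} (hA : A.IsHermitian) :
    (hA.eigenvectorUnitary : Matrix n n ℂ)ᴴ * (hA.eigenvectorUnitary : Matrix n n ℂ) = 1 :=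
  Unitary.coe_star_mul_self _

theorem gh_AU {A : Matrix n n ℂ} (hA : A.IsHermitian) :
    A * (hA.eigenvectorUnitary : Matrix n n ℂ) = (hA.eigenvectorUnitary : Matrix n n ℂ) *
      diagonal (fun i => (hA.eigenvalues i : ℂ)) := by
  refine (congrArg (fun X => X * (hA.eigenvectorUnitary : Matrix n n ℂ)) (gh_spec hA)).trans ?_
  rw [Matrix.mul_assoc, gh_UU, Matrix.mul_one]

theorem gh_pinv_mul {A : Matrix n n ℂ} (hA : A.IsHermitian) :
    pinvH A * A = (hA.eigenvectorUnitary : Matrix n n ℂ) *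
      diagonal (fun i => if hA.eigenvalues i = 0 then (0:ℂ) else 1) *
        (hA.eigenvectorUnitary : Matrix n n ℂ)ᴴ := by
  conv_lhs => rw [pinvH, dif_pos hA]; arg 2; rw [gh_spec hA]
  rw [star_eq_conjTranspose]
  rw [show ∀ U D E : Matrix n n ℂ, U * D * Uᴴ * (U * E * Uᴴ) = U * (D * (Uᴴ * U) * E) * Uᴴ by
    intros; simp only [Matrix.mul_assoc]]
  rw [gh_UU, Matrix.mul_one, diagonal_mul_diagonal]
  congr 3
  funext i
  split_ifs with h <;> simp [h]

theorem gh_mul_pinv {A : Matrix n n ℂ} (hA : A.IsHermitian) :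
    A * pinvH A = pinvH A * A := by
  rw [gh_pinv_mul hA]
  conv_lhs => rw [pinvH, dif_pos hA]; arg 1; rw [gh_spec hA]
  rw [star_eq_conjTranspose]
  rw [show ∀ U D E : Matrix n n ℂ, U * D * Uᴴ * (U * E * Uᴴ) = U * (D * (Uᴴ * U) * E) * Uᴴ by
    intros; simp only [Matrix.mul_assoc]]
  rw [gh_UU, Matrix.mul_one, diagonal_mul_diagonal]
  congr 3
  funext i
  split_ifs with h <;> simp [h]

theorem gh_pinv_herm {A : Matrix n n ℂ} (hA : A.IsHermitian) : (pinvH A)ᴴ = pinvH A := by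
  rw [pinvH, dif_pos hA, star_eq_conjTranspose]
  simp only [conjTranspose_mul, conjTranspose_conjTranspose, diagonal_conjTranspose,
    Matrix.mul_assoc]
  congr 3
  funext i
  simp only [Pi.star_apply]
  split_ifs with h <;> simp

theorem gh_null_mul {A : Matrix n n ℂ} (hA : A.IsHermitian) : nullProj A * A = 0 := by
  rw [nullProj, Matrix.sub_mul, Matrix.one_mul, gh_pinv_mul hA, Matrix.mul_assoc]
  have : (hA.eigenvectorUnitary : Matrix n n ℂ)ᴴ * A =
      diagonal (fun i => (hA.eigenvalues i : ℂ)) * (hA.eigenvectorUnitary : Matrix n n ℂ)ᴴ := by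
    refine (congrArg (fun X => (hA.eigenvectorUnitary : Matrix n n ℂ)ᴴ * X) (gh_spec hA)).trans ?_
    rw [← Matrix.mul_assoc, ← Matrix.mul_assoc, gh_UU, Matrix.one_mul]
  rw [this, Matrix.mul_assoc, ← Matrix.mul_assoc (diagonal _), diagonal_mul_diagonal]
  rw [sub_eq_zero]
  conv_lhs => rw [gh_spec hA]
  rw [Matrix.mul_assoc]
  congr 3
  funext i
  split_ifs with h <;> simp [h]

theorem gh_null_herm {A : Matrix n n ℂ} (hA : A.IsHermitian) : (nullProj A)ᴴ = nullProj A := by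
  rw [nullProj, conjTranspose_sub, conjTranspose_one, conjTranspose_mul, gh_pinv_herm hA, hA.eq,
    gh_mul_pinv hA]

theorem gh_mul_null {A : Matrix n n ℂ} (hA : A.IsHermitian) : A * nullProj A = 0 := by
  have := congrArg conjTranspose (gh_null_mul hA)
  rwa [conjTranspose_mul, gh_null_herm hA, hA.eq, conjTranspose_zero] at this

theorem gh_null_sq {A : Matrix n n ℂ} (hA : A.IsHermitian) :
    nullProj A * nullProj A = nullProj A := by
  conv_lhs => arg 1; rw [nullProj]
  rw [Matrix.sub_mul, Matrix.one_mul, Matrix.mul_assoc, gh_mul_null hA, Matrix.mul_zero, sub_zero]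

/-- eigenvectors satisfying a predicate -/
def ghE {A : Matrix n n ℂ} (hA : A.IsHermitian) (p : n → Prop) : Matrix n {i // p i} ℂ :=
  (hA.eigenvectorUnitary : Matrix n n ℂ).submatrix id Subtype.val

theorem ghE_mul {A : Matrix n n ℂ} (hA : A.IsHermitian) (p : n → Prop) [Fintype {i // p i}] :
    A * ghE hA p = ghE hA p * diagonal (fun i : {i // p i} => (hA.eigenvalues i.1 : ℂ)) := by
  have := congrArg (fun X => X.submatrix id (Subtype.val : {i // p i} → n)) (gh_AU hA)
  ext i j
  have h := congrFun (congrFun this i) j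
  simp only [submatrix_apply, id, mul_diagonal] at h
  exact h.trans (mul_diagonal (fun i : {i // p i} => (hA.eigenvalues i.1 : ℂ)) (ghE hA p) i j).symm

theorem ghE_orth {A : Matrix n n ℂ} (hA : A.IsHermitian) (p : n → Prop) [Fintype {i // p i}] : (ghE hA p)ᴴ * ghE hA p = 1 := by
  ext i j
  have h := congrFun (congrFun (gh_UU hA) i) j
  rw [one_apply] at h ⊢
  simp only [Subtype.ext_iff]
  exact h

theorem ghE_null {A : Matrix n n ℂ} (hA : A.IsHermitian) (p : n → Prop) [Fintype {i // p i}] (hp : ∀ i, p i → hA.eigenvalues i ≠ 0) :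
    nullProj A * ghE hA p = 0 := by
  have h : nullProj A * ghE hA p * diagonal (fun i : {i // p i} => (hA.eigenvalues i.1 : ℂ)) = 0 := by
    rw [Matrix.mul_assoc, ← ghE_mul, ← Matrix.mul_assoc, gh_null_mul hA, Matrix.zero_mul]
  ext i j
  have := congrFun (congrFun h i) j
  rcases mul_eq_zero.1 ((mul_diagonal _ _ _ _).symm.trans this) with h | h
  · exact h
  · exact absurd (by exact_mod_cast h) (hp j.1 j.2)

theorem gh_key {M : Matrix n n ℂ} (hM : M.IsHermitian) (s : ℝ) {k : Type*} [Fintype k]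
    [DecidableEq k] (T : Matrix n k ℂ) (h : ((s : ℂ) • (Tᴴ * M * T)).PosDef) :
    Nat.card k ≤ Nat.card {i // 0 < s * hM.eigenvalues i} := by
  classical
  by_contra hlt
  push Not at hlt
  rw [Nat.card_eq_fintype_card, Nat.card_eq_fintype_card] at hlt
  have hk : LinearMap.ker ((ghE hM (fun i => 0 < s * hM.eigenvalues i))ᴴ * T).mulVecLin ≠ ⊥ := by
    apply LinearMap.ker_ne_bot_of_finrank_lt
    simpa using hlt
  obtain ⟨x, hx, hx0⟩ := Submodule.exists_mem_ne_zero_of_ne_bot hk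
  have hpos := h.dotProduct_mulVec_pos hx0
  set U := (hM.eigenvectorUnitary : Matrix n n ℂ) with hU
  set z := (Uᴴ * T) *ᵥ x with hz
  have hz0 : ∀ i, 0 < s * hM.eigenvalues i → z i = 0 := by
    intro i hi
    have := congrFun (show ((ghE hM (fun i => 0 < s * hM.eigenvalues i))ᴴ * T) *ᵥ x = 0 from hx) ⟨i, hi⟩
    exact this
  have e : Tᴴ * M * T = (Uᴴ * T)ᴴ * diagonal (fun i => (hM.eigenvalues i : ℂ)) * (Uᴴ * T) := by
    conv_lhs => rw [gh_spec hM]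
    rw [conjTranspose_mul, conjTranspose_conjTranspose]
    simp only [Matrix.mul_assoc]
    rfl
  have e2 : star x ⬝ᵥ ((s : ℂ) • (Tᴴ * M * T)) *ᵥ x
      = ((∑ i, (s * hM.eigenvalues i) * Complex.normSq (z i) : ℝ) : ℂ) := by
    rw [e, smul_mulVec, dotProduct_smul, ← mulVec_mulVec, ← mulVec_mulVec, ← hz, dotProduct_mulVec,
      ← star_mulVec, ← hz, dotProduct, smul_eq_mul, Finset.mul_sum]
    push_cast
    refine Finset.sum_congr rfl fun i _ => ?_
    rw [mulVec_diagonal, Complex.normSq_eq_conj_mul_self]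
    simp only [Pi.star_apply, RCLike.star_def]
    ring
  rw [e2] at hpos
  have hpos' : 0 < ∑ i, (s * hM.eigenvalues i) * Complex.normSq (z i) := by exact_mod_cast hpos
  refine absurd hpos' (not_lt.2 (Finset.sum_nonpos fun i _ => ?_))
  by_cases hi : 0 < s * hM.eigenvalues i
  · simp [hz0 i hi]
  · exact mul_nonpos_of_nonpos_of_nonneg (not_lt.1 hi) (Complex.normSq_nonneg _)

theorem gh_zero {M : Matrix n n ℂ} (hM : M.IsHermitian) :
    iZero M = Module.finrank ℂ (LinearMap.ker M.mulVecLin) := by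
  classical
  have h1 := hM.rank_eq_card_non_zero_eigs
  have h2 := LinearMap.finrank_range_add_finrank_ker M.mulVecLin
  have h3 := Fintype.card_subtype_compl (fun i => hM.eigenvalues i = 0)
  have h4 := Fintype.card_subtype_le (fun i => hM.eigenvalues i = 0)
  rw [iZero, dif_pos hM, Nat.card_eq_fintype_card]
  rw [Matrix.rank] at h1
  simp only [Module.finrank_pi] at h2
  simp only [ne_eq] at h1
  omega

theorem gh_sum {M : Matrix n n ℂ} (hM : M.IsHermitian) :
    iPos M + iNeg M + iZero M = Fintype.card n := by
  classical
  rw [iPos, iNeg, iZero, dif_pos hM, dif_pos hM, dif_pos hM]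
  simp only [Nat.card_eq_fintype_card, Fintype.card_subtype]
  rw [← Finset.card_union_of_disjoint, ← Finset.card_union_of_disjoint, ← Finset.card_univ]
  · congr 1
    ext i
    rcases lt_trichotomy (hM.eigenvalues i) 0 with h | h | h <;> simp [h]
  · rw [Finset.disjoint_left]
    intro i
    simp only [Finset.mem_union, Finset.mem_filter]
    rintro (h | h) h' <;> linarith [h.2, h'.2]
  · rw [Finset.disjoint_left]
    intro i
    simp only [Finset.mem_filter]
    rintro h h'
    linarith [h.2, h'.2]

theorem gh_iPos {M : Matrix n n ℂ} (hM : M.IsHermitian) :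
    iPos M = Nat.card {i // 0 < (1:ℝ) * hM.eigenvalues i} := by
  rw [iPos, dif_pos hM]; simp

theorem gh_iNeg {M : Matrix n n ℂ} (hM : M.IsHermitian) :
    iNeg M = Nat.card {i // 0 < (-1:ℝ) * hM.eigenvalues i} := by
  rw [iNeg, dif_pos hM]; simp
end

section
variable {n e m : Type*} [Fintype n] [DecidableEq n] [Fintype e] [DecidableEq e]
  [Fintype m] [DecidableEq m]

/-- core computation of the reduced form in adapted coordinates -/
theorem gh_core {k1 k2 k3 : Type*} [Fintype k1] [Fintype k2] [Fintype k3]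
    (A : Matrix n n ℂ) (K : Matrix n e ℂ) (S : Matrix e e ℂ)
    (hS : Sᴴ = S)
    (hAK : A * K = 0) (hKA : Kᴴ * A = 0)
    (E1 : Matrix n k1 ℂ) (hE1 : Kᴴ * E1 = 0)
    (W : Matrix e k2 ℂ) (hW : K * W = 0)
    (Y : Matrix e k3 ℂ)
    (G : Matrix e e ℂ) (Q : Matrix e e ℂ) (hG : Kᴴ * K * G = Q) (hQ : Qᴴ = Q)
    (hQW : Q * W = 0) (hQY : Q * Y = Y) (s : ℝ) :
    (fromBlocks E1 (K * fromCols (-(G * S * W)) ((2⁻¹ : ℂ) • (G * ((s : ℂ) • Y - S * Y))))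
        0 (fromCols W Y))ᴴ * fromBlocks A K Kᴴ S *
      (fromBlocks E1 (K * fromCols (-(G * S * W)) ((2⁻¹ : ℂ) • (G * ((s : ℂ) • Y - S * Y))))
        0 (fromCols W Y)) =
      fromBlocks (E1ᴴ * A * E1) 0 0 (fromBlocks (Wᴴ * S * W) 0 0 ((s : ℂ) • (Yᴴ * Y))) := by
  set L := fromCols (-(G * S * W)) ((2⁻¹ : ℂ) • (G * ((s : ℂ) • Y - S * Y))) with hL
  set R := fromCols W Y with hR
  have hE1' : E1ᴴ * K = 0 := by
    have := congrArg conjTranspose hE1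
    simpa using this
  have hWQ : Wᴴ * Q = 0 := by
    have := congrArg conjTranspose hQW
    simpa [hQ] using this
  have hYQ : Yᴴ * Q = Yᴴ := by
    have := congrArg conjTranspose hQY
    simpa [hQ] using this
  have hX : Rᴴ * (Kᴴ * K * L) =
      fromBlocks 0 0 (-(Yᴴ * S * W)) ((2⁻¹ : ℂ) • ((s : ℂ) • (Yᴴ * Y) - Yᴴ * S * Y)) := by
    rw [hL, hR, mul_fromCols, conjTranspose_fromCols_eq_fromRows_conjTranspose,
      fromRows_mul_fromCols, Matrix.mul_neg, Matrix.mul_smul, Matrix.mul_assoc G, ← Matrix.mul_assoc _ G,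
      ← Matrix.mul_assoc _ G, hG]
    simp only [Matrix.mul_neg, Matrix.mul_smul, ← Matrix.mul_assoc, hWQ, hYQ, Matrix.zero_mul,
      neg_zero, smul_zero, Matrix.mul_sub, sub_zero]
  have hX' : (Kᴴ * K * L)ᴴ * R =
      fromBlocks 0 (-(Wᴴ * S * Y)) 0 ((2⁻¹ : ℂ) • ((s : ℂ) • (Yᴴ * Y) - Yᴴ * S * Y)) := by
    have := congrArg conjTranspose hX
    rw [conjTranspose_mul, conjTranspose_conjTranspose] at this
    rw [this, fromBlocks_conjTranspose]
    simp [hS, Matrix.mul_assoc]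
  have hRS : Rᴴ * S * R = fromBlocks (Wᴴ * S * W) (Wᴴ * S * Y) (Yᴴ * S * W) (Yᴴ * S * Y) := by
    rw [hR, Matrix.mul_assoc, mul_fromCols, conjTranspose_fromCols_eq_fromRows_conjTranspose,
      fromRows_mul_fromCols]
    simp only [Matrix.mul_assoc]
  have hlast : (K * L)ᴴ * (A * (K * L) + K * R) + Rᴴ * (Kᴴ * (K * L) + S * R)
      = fromBlocks (Wᴴ * S * W) 0 0 ((s : ℂ) • (Yᴴ * Y)) := by
    have : (K * L)ᴴ * (A * (K * L) + K * R) + Rᴴ * (Kᴴ * (K * L) + S * R)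
       = (Kᴴ * K * L)ᴴ * R + Rᴴ * (Kᴴ * K * L) + Rᴴ * S * R := by
      rw [← Matrix.mul_assoc A, hAK]
      simp only [Matrix.zero_mul, zero_add, conjTranspose_mul, conjTranspose_conjTranspose,
        Matrix.mul_add, Matrix.mul_assoc, add_assoc]
    rw [this, hX, hX', hRS, fromBlocks_add, fromBlocks_add]
    congr 1
    · simp
    · simp
    · simp
    · module
  rw [fromBlocks_conjTranspose, Matrix.mul_assoc, fromBlocks_multiply, fromBlocks_multiply, hlast]
  have h1 : E1ᴴ * (A * (K * L) + K * R) = 0 := by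
    rw [← Matrix.mul_assoc A, hAK, Matrix.zero_mul, zero_add, ← Matrix.mul_assoc, hE1',
      Matrix.zero_mul]
  have h2 : (K * L)ᴴ * (A * E1) = 0 := by
    rw [conjTranspose_mul, Matrix.mul_assoc, ← Matrix.mul_assoc Kᴴ, hKA, Matrix.zero_mul,
      Matrix.mul_zero]
  rw [h1]
  simp only [Matrix.mul_zero, add_zero, hE1, h2, conjTranspose_zero, Matrix.zero_mul, Matrix.mul_assoc]

theorem gh_bound
    (A : Matrix n n ℂ) (hA : A.IsHermitian) (K : Matrix n e ℂ) (S : Matrix e e ℂ)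
    (hS : S.IsHermitian) (hAK : A * K = 0) (hPK : nullProj A * K = K)
    (V : Matrix e m ℂ) (hKV : K * V = 0)
    (hSQ : (Vᴴ * S * V).IsHermitian)
    (M : Matrix (n ⊕ e) (n ⊕ e) ℂ) (hM : M.IsHermitian)
    (Z : Matrix (n ⊕ e) (n ⊕ e) ℂ) (hZ : Zᴴ * M * Z = fromBlocks A K Kᴴ S)
    (s : ℝ) (hs : s * s = 1) :
    Nat.card {i // 0 < s * hA.eigenvalues i} + Nat.card {i // 0 < s * hSQ.eigenvalues i}
      + (Kᴴ * K).rank ≤ Nat.card {i // 0 < s * hM.eigenvalues i} := by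
  classical
  have hH : (Kᴴ * K).IsHermitian := isHermitian_conjTranspose_mul_self K
  rw [hH.rank_eq_card_non_zero_eigs, ← Nat.card_eq_fintype_card]
  set E1 := ghE hA (fun i => 0 < s * hA.eigenvalues i) with hE1
  set E2 := ghE hSQ (fun i => 0 < s * hSQ.eigenvalues i) with hE2
  set Y := ghE hH (fun i => hH.eigenvalues i ≠ 0) with hY
  have hKP : Kᴴ * nullProj A = Kᴴ := by
    have := congrArg conjTranspose hPK
    rwa [conjTranspose_mul, gh_null_herm hA] at this
  have hKA : Kᴴ * A = 0 := by
    have := congrArg conjTranspose hAK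
    rwa [conjTranspose_mul, hA.eq, conjTranspose_zero] at this
  have a1 : Kᴴ * E1 = 0 := by
    rw [← hKP, Matrix.mul_assoc, hE1, ghE_null hA, Matrix.mul_zero]
    rintro i hi h0
    simp [h0] at hi
  have a2 : (pinvH (Kᴴ * K) * (Kᴴ * K)) * (V * E2) = 0 := by
    have h0 : pinvH (Kᴴ * K) * (Kᴴ * K) * V = 0 := by
      rw [Matrix.mul_assoc, Matrix.mul_assoc Kᴴ, hKV]
      simp
    exact (Matrix.mul_assoc _ _ _).symm.trans (by rw [h0, Matrix.zero_mul])
  have a3 : (pinvH (Kᴴ * K) * (Kᴴ * K)) * Y = Y := by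
    have := ghE_null hH (fun i => hH.eigenvalues i ≠ 0) (fun i h => h)
    rw [nullProj, Matrix.sub_mul, Matrix.one_mul, sub_eq_zero] at this
    exact this.symm
  have a4 : (pinvH (Kᴴ * K) * (Kᴴ * K))ᴴ = pinvH (Kᴴ * K) * (Kᴴ * K) := by
    rw [conjTranspose_mul, gh_pinv_herm hH, hH.eq, gh_mul_pinv hH]
  have core := gh_core A K S hS.eq hAK hKA E1 a1 (V * E2)
    (by rw [← Matrix.mul_assoc, hKV, Matrix.zero_mul]) Y (pinvH (Kᴴ * K)) _ (gh_mul_pinv hH) a4 a2 a3 s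
  generalize (fromBlocks E1 (K * fromCols (-(pinvH (Kᴴ * K) * S * (V * E2)))
    ((2⁻¹ : ℂ) • (pinvH (Kᴴ * K) * ((s : ℂ) • Y - S * Y)))) 0 (fromCols (V * E2) Y)) = T at core
  have b1 : E1ᴴ * A * E1 = diagonal (fun i : {i // 0 < s * hA.eigenvalues i} =>
      (hA.eigenvalues i.1 : ℂ)) := by
    rw [Matrix.mul_assoc, hE1, ghE_mul hA, ← Matrix.mul_assoc, ghE_orth, Matrix.one_mul]
  have b2 : (V * E2)ᴴ * S * (V * E2) = diagonal (fun i : {i // 0 < s * hSQ.eigenvalues i} =>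
      (hSQ.eigenvalues i.1 : ℂ)) := by
    have : (V * E2)ᴴ * S * (V * E2) = E2ᴴ * ((Vᴴ * S * V) * E2) := by
      simp only [conjTranspose_mul, Matrix.mul_assoc]
    rw [this, hE2, ghE_mul hSQ, ← Matrix.mul_assoc, ghE_orth, Matrix.one_mul]
  have b3 : Yᴴ * Y = 1 := ghE_orth hH _
  have key := gh_key hM s (Z * T) (by
    have : (Z * T)ᴴ * M * (Z * T) = Tᴴ * (Zᴴ * M * Z) * T := by
      simp only [conjTranspose_mul, Matrix.mul_assoc]
    rw [this, hZ, core, b1, b2, b3, ← diagonal_one, ← diagonal_smul, fromBlocks_diagonal,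
      fromBlocks_diagonal, ← diagonal_smul, posDef_diagonal_iff]
    rintro (i | i | i)
    · simpa using (by exact_mod_cast i.2 : (0:ℂ) < (s : ℂ) * (hA.eigenvalues i.1 : ℂ))
    · simpa using (by exact_mod_cast i.2 : (0:ℂ) < (s : ℂ) * (hSQ.eigenvalues i.1 : ℂ))
    · have : (0:ℂ) < (s : ℂ) * (s : ℂ) := by exact_mod_cast (hs ▸ one_pos : 0 < s * s)
      simpa using this)
  rw [Nat.card_sum, Nat.card_sum, ← add_assoc] at key
  exact key

theorem gh_kernel
    (A : Matrix n n ℂ) (K : Matrix n e ℂ) (S : Matrix e e ℂ)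
    (hAK : A * K = 0)
    (V : Matrix e m ℂ) (hV : Vᴴ * V = 1)
    (hVr : LinearMap.range V.mulVecLin = LinearMap.ker (Kᴴ * K).mulVecLin)
    (M : Matrix (n ⊕ e) (n ⊕ e) ℂ)
    (Z : Matrix (n ⊕ e) (n ⊕ e) ℂ) (hZ : M * Z = Zᴴ⁻¹ * fromBlocks A K Kᴴ S)
    (hZi : IsUnit Z.det) :
    Module.finrank ℂ (LinearMap.ker A.mulVecLin) +
      Module.finrank ℂ (LinearMap.ker (Vᴴ * S * V).mulVecLin) ≤
      Module.finrank ℂ (LinearMap.ker M.mulVecLin) + (Kᴴ * K).rank := by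
  have hH : (Kᴴ * K).IsHermitian := isHermitian_conjTranspose_mul_self K
  have hKV : K * V = 0 := by
    have h : ∀ x, (K * V) *ᵥ x = 0 := by
      intro x
      have : V *ᵥ x ∈ LinearMap.ker (Kᴴ * K).mulVecLin := by
        rw [← hVr]; exact ⟨x, rfl⟩
      rw [ker_mulVecLin_conjTranspose_mul_self] at this
      rw [← mulVec_mulVec]; exact this
    exact Matrix.mulVec_injective (funext fun x => by simp [h])
  set H := Kᴴ * K with hHdef
  -- the complementary projection is `V Vᴴ`
  have hVV : nullProj H = V * Vᴴ := by
    have h1 : ∀ x, ∃ w, V *ᵥ w = nullProj H *ᵥ x := by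
      intro x
      have : nullProj H *ᵥ x ∈ LinearMap.ker H.mulVecLin := by
        simp [gh_mul_null hH]
      rw [← hVr] at this
      exact this
    have h2 : V * Vᴴ * nullProj H = nullProj H := by
      refine Matrix.mulVec_injective (funext fun x => ?_)
      obtain ⟨w, hw⟩ := h1 x
      rw [← mulVec_mulVec, ← hw, mulVec_mulVec, Matrix.mul_assoc, hV, Matrix.mul_one]
    have h3 : Vᴴ * nullProj H = Vᴴ := by
      have : nullProj H * V = V := by
        rw [nullProj, Matrix.sub_mul, Matrix.one_mul, hHdef, Matrix.mul_assoc, Matrix.mul_assoc Kᴴ,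
          hKV]
        simp
      have := congrArg conjTranspose this
      rwa [conjTranspose_mul, gh_null_herm hH] at this
    rw [← h2, Matrix.mul_assoc, h3]
  set X := -(pinvH H * S * V) with hX
  have hHX : H * X + S * V = V * (Vᴴ * S * V) := by
    have : V * (Vᴴ * S * V) = nullProj H * (S * V) := by rw [hVV]; simp only [Matrix.mul_assoc]
    rw [this, nullProj, Matrix.sub_mul, Matrix.one_mul, hX, Matrix.mul_neg, ← gh_mul_pinv hH]
    simp only [Matrix.mul_assoc]
    abel
  set p := LinearMap.ker A.mulVecLin ⊓ LinearMap.ker Kᴴ.mulVecLin with hp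
  set q := LinearMap.ker (Vᴴ * S * V).mulVecLin with hq
  have hdim : Module.finrank ℂ (LinearMap.ker A.mulVecLin) ≤ Module.finrank ℂ p + H.rank := by
    have h1 := Submodule.finrank_sup_add_finrank_inf_eq (LinearMap.ker A.mulVecLin)
      (LinearMap.ker Kᴴ.mulVecLin)
    rw [← hp] at h1
    have h2 := Submodule.finrank_le (LinearMap.ker A.mulVecLin ⊔ LinearMap.ker Kᴴ.mulVecLin)
    have h3 := LinearMap.finrank_range_add_finrank_ker Kᴴ.mulVecLin
    have h4 : H.rank = Module.finrank ℂ (LinearMap.range Kᴴ.mulVecLin) := by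
      rw [hHdef, rank_conjTranspose_mul_self, ← rank_conjTranspose]; rfl
    omega
  let f : (p × q) →ₗ[ℂ] (n ⊕ e → ℂ) :=
    Z.mulVecLin ∘ₗ ((LinearEquiv.sumArrowLequivProdArrow n e ℂ ℂ).symm.toLinearMap ∘ₗ
      (LinearMap.prod (p.subtype ∘ₗ LinearMap.fst ℂ p q + (K * X).mulVecLin ∘ₗ q.subtype ∘ₗ LinearMap.snd ℂ p q)
        (V.mulVecLin ∘ₗ q.subtype ∘ₗ LinearMap.snd ℂ p q)))
  have hf : ∀ x : p × q, f x = Z *ᵥ (Sum.elim (x.1.1 + (K * X) *ᵥ x.2.1) (V *ᵥ x.2.1)) := fun x => rfl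
  have hfi : Function.Injective f := by
    rw [← LinearMap.ker_eq_bot, LinearMap.ker_eq_bot']
    intro x hx
    rw [hf] at hx
    have hx2 := Matrix.eq_zero_of_mulVec_eq_zero hZi.ne_zero hx
    have c2 : V *ᵥ x.2.1 = 0 := by
      funext i; exact congrFun hx2 (Sum.inr i)
    have c2' : x.2.1 = 0 := by
      have := congrArg (fun y => Vᴴ *ᵥ y) c2
      simpa [mulVec_mulVec, hV] using this
    have c1 : x.1.1 = 0 := by
      have : x.1.1 + (K * X) *ᵥ x.2.1 = 0 := by
        funext i; exact congrFun hx2 (Sum.inl i)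
      simpa [c2'] using this
    exact Prod.ext (Subtype.ext c1) (Subtype.ext c2')
  have hfr : LinearMap.range f ≤ LinearMap.ker M.mulVecLin := by
    rintro _ ⟨x, rfl⟩
    rw [LinearMap.mem_ker, hf, mulVecLin_apply, mulVec_mulVec, hZ, ← mulVec_mulVec,
      fromBlocks_mulVec]
    have d1 : A *ᵥ x.1.1 = 0 := x.1.2.1
    have d2 : Kᴴ *ᵥ x.1.1 = 0 := x.1.2.2
    have d3 : (Vᴴ * S * V) *ᵥ x.2.1 = 0 := x.2.2
    have g1 : A *ᵥ (x.1.1 + (K * X) *ᵥ x.2.1) + K *ᵥ (V *ᵥ x.2.1) = 0 := by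
      rw [mulVec_add, d1, mulVec_mulVec, mulVec_mulVec, ← Matrix.mul_assoc, hAK, hKV]
      simp
    have g2 : Kᴴ *ᵥ (x.1.1 + (K * X) *ᵥ x.2.1) + S *ᵥ (V *ᵥ x.2.1) = 0 := by
      rw [mulVec_add, d2, mulVec_mulVec, mulVec_mulVec, ← Matrix.mul_assoc, zero_add, ← add_mulVec,
        hHX, ← mulVec_mulVec, d3, mulVec_zero]
    simp only [Sum.elim_comp_inl, Sum.elim_comp_inr]
    rw [g1, g2]
    simp
  have h5 := LinearMap.finrank_range_of_inj hfi
  have h6 := Submodule.finrank_mono hfr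
  rw [h5, Module.finrank_prod] at h6
  omega
end

theorem gh_pinv_null {n : Type*} [Fintype n] [DecidableEq n] {A : Matrix n n ℂ}
    (hA : A.IsHermitian) : pinvH A * nullProj A = 0 := by
  rw [nullProj, Matrix.mul_sub, Matrix.mul_one, gh_pinv_mul hA, sub_eq_zero, pinvH, dif_pos hA]
  rw [star_eq_conjTranspose]
  rw [show ∀ U D E : Matrix n n ℂ, U * D * Uᴴ * (U * E * Uᴴ) = U * (D * (Uᴴ * U) * E) * Uᴴ by
    intros; simp only [Matrix.mul_assoc]]
  rw [gh_UU, Matrix.mul_one, diagonal_mul_diagonal]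
  congr 3
  funext i
  split_ifs with h <;> simp

/-- Theorem A.1 of the paper (generalized Haynsworth formula): for a Hermitian block
matrix `M = [[A, B], [B*, C]]`, with `P` the orthogonal projection onto `Null(A)`,
`𝒬 = Null(B*PB)` (realized via an orthonormal basis `V`), `i_∞ = rank(B*PB) = d − dim 𝒬`
and generalized Schur complement `M/A = C − B*A⁺B`, one has
`In(M) = In(A) + In_𝒬(M/A) + (i_∞, i_∞, −i_∞)`. -/
theorem generalized_Haynsworth
    (N d m : ℕ)
    (A : Matrix (Fin N) (Fin N) ℂ) (hA : A.IsHermitian)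
    (C : Matrix (Fin d) (Fin d) ℂ) (hC : C.IsHermitian)
    (B : Matrix (Fin N) (Fin d) ℂ)
    (M : Matrix (Fin N ⊕ Fin d) (Fin N ⊕ Fin d) ℂ)
    (hM : M = Matrix.fromBlocks A B Bᴴ C)
    (P : Matrix (Fin N) (Fin N) ℂ) (hP : P = nullProj A)
    (V : Matrix (Fin d) (Fin m) ℂ) (hV : Vᴴ * V = 1)
    (hVrange : LinearMap.range V.mulVecLin = LinearMap.ker (Bᴴ * P * B).mulVecLin)
    (SchurQ : Matrix (Fin m) (Fin m) ℂ)
    (hSchurQ : SchurQ = Vᴴ * (C - Bᴴ * pinvH A * B) * V)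
    (iinf : ℕ) (hiinf : iinf = (Bᴴ * P * B).rank) :
    iinf = d - m ∧
    (iPos M : ℤ) = iPos A + iPos SchurQ + iinf ∧
    (iNeg M : ℤ) = iNeg A + iNeg SchurQ + iinf ∧
    (iZero M : ℤ) = iZero A + iZero SchurQ - iinf := by
  have hAn := gh_mul_null hA
  have hPh : Pᴴ = P := by rw [hP]; exact gh_null_herm hA
  have hPP : P * P = P := by rw [hP]; exact gh_null_sq hA
  have hAP : A * P = 0 := by rw [hP]; exact gh_mul_null hA
  have hpP : pinvH A * P = 0 := by rw [hP]; exact gh_pinv_null hA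
  have hpA : pinvH A * A = 1 - P := by rw [hP, nullProj]; abel
  have hAp : A * pinvH A = 1 - P := by rw [gh_mul_pinv hA, hpA]
  have hph := gh_pinv_herm hA
  obtain ⟨K, hK⟩ : ∃ K, K = P * B := ⟨_, rfl⟩
  have hKh : Kᴴ = Bᴴ * P := by rw [hK, conjTranspose_mul, hPh]
  have hKK : Bᴴ * P * B = Kᴴ * K := by
    rw [hKh, hK, ← Matrix.mul_assoc, Matrix.mul_assoc Bᴴ P P, hPP]
  rw [hKK] at hiinf hVrange
  obtain ⟨S, hSdef⟩ : ∃ S, S = C - Bᴴ * pinvH A * B := ⟨_, rfl⟩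
  rw [← hSdef] at hSchurQ
  have hS : S.IsHermitian := by
    rw [IsHermitian, hSdef, conjTranspose_sub, hC.eq, conjTranspose_mul, conjTranspose_mul,
      conjTranspose_conjTranspose, hph, Matrix.mul_assoc]
  have hMh : M.IsHermitian := by
    rw [IsHermitian, hM, fromBlocks_conjTranspose, hA.eq, hC.eq, conjTranspose_conjTranspose]
  have hSQ : (Vᴴ * S * V).IsHermitian := isHermitian_conjTranspose_mul_mul V hS
  have hAK : A * K = 0 := by rw [hK, ← Matrix.mul_assoc, hAP, Matrix.zero_mul]
  have hPK : nullProj A * K = K := by rw [← hP, hK, ← Matrix.mul_assoc, hPP]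
  have hKV : K * V = 0 := by
    have h : ∀ x, (K * V) *ᵥ x = 0 := by
      intro x
      have : V *ᵥ x ∈ LinearMap.ker (Kᴴ * K).mulVecLin := by
        rw [← hVrange]; exact ⟨x, rfl⟩
      rw [ker_mulVecLin_conjTranspose_mul_self] at this
      rw [← mulVec_mulVec]; exact this
    exact Matrix.mulVec_injective (funext fun x => by simp [h])
  obtain ⟨Z, hZdef⟩ : ∃ Z : Matrix (Fin N ⊕ Fin d) (Fin N ⊕ Fin d) ℂ,
    Z = fromBlocks 1 (-(pinvH A * B)) 0 1 := ⟨_, rfl⟩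
  have hZdet : Z.det = 1 := by rw [hZdef, det_fromBlocks_zero₂₁]; simp
  have hZ : Zᴴ * (M * Z) = fromBlocks A K Kᴴ S := by
    have h1 : M * Z = fromBlocks A K Bᴴ S := by
      rw [hM, hZdef, fromBlocks_multiply]
      congr 1
      · simp
      · rw [Matrix.mul_neg, ← Matrix.mul_assoc, hAp, hK, Matrix.sub_mul]; simp
      · simp
      · rw [hSdef, Matrix.mul_neg, ← Matrix.mul_assoc, Matrix.mul_one]; abel
    rw [h1, hZdef, fromBlocks_conjTranspose, fromBlocks_multiply]
    have h2 : (-(pinvH A * B))ᴴ = -(Bᴴ * pinvH A) := by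
      rw [conjTranspose_neg, conjTranspose_mul, hph]
    rw [h2]
    congr 1
    · simp
    · simp
    · rw [Matrix.neg_mul, Matrix.mul_assoc, hpA, hKh, Matrix.mul_sub]; simp
    · rw [Matrix.neg_mul, Matrix.mul_assoc, hK, ← Matrix.mul_assoc (pinvH A), hpP]; simp
  have hZu : IsUnit Z.det := by rw [hZdet]; exact isUnit_one
  have hZu' : IsUnit Zᴴ.det := by rw [det_conjTranspose, hZdet]; simp
  have hZ1 : Zᴴ * M * Z = fromBlocks A K Kᴴ S := by rw [Matrix.mul_assoc, hZ]
  have hZ2 : M * Z = Zᴴ⁻¹ * fromBlocks A K Kᴴ S := by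
    rw [← hZ, Matrix.nonsing_inv_mul_cancel_left _ _ hZu']
  have hpos := gh_bound A hA K S hS hAK hPK V hKV hSQ M hMh Z hZ1 1 (by norm_num)
  have hneg := gh_bound A hA K S hS hAK hPK V hKV hSQ M hMh Z hZ1 (-1) (by norm_num)
  have hker := gh_kernel A K S hAK V hV hVrange M Z hZ2 hZu
  rw [← gh_iPos, ← gh_iPos, ← gh_iPos, ← hSchurQ, ← hiinf] at hpos
  rw [← gh_iNeg, ← gh_iNeg, ← gh_iNeg, ← hSchurQ, ← hiinf] at hneg
  rw [← gh_zero hA, ← gh_zero hSQ, ← gh_zero hMh, ← hSchurQ, ← hiinf] at hker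
  have hdm : iinf + m = d := by
    have h1 := LinearMap.finrank_range_add_finrank_ker (Kᴴ * K).mulVecLin
    have h2 : Function.Injective V.mulVecLin := by
      intro x y hxy
      have := congrArg (fun z => Vᴴ *ᵥ z) (show V *ᵥ x = V *ᵥ y from hxy)
      simpa [mulVec_mulVec, hV] using this
    have h3 := LinearMap.finrank_range_of_inj h2
    rw [← hVrange, h3] at h1
    rw [hiinf, Matrix.rank]
    simpa using h1
  have s1 := gh_sum hA
  have s2 := gh_sum hSQ
  have s3 := gh_sum hMh
  rw [← hSchurQ] at s2
  simp only [Fintype.card_fin, Fintype.card_sum] at s1 s2 s3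
  omega
end
end
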